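/- Let (N, B, L) be a Hadamard triple in ℝ with 0 ∈ B ∩ L, write d = gcd(B), and let μ_{N,B} be the self-similar measure associated with (N,B), i.e., the unique Borel probability measure μ on ℝ satisfying μ = (1/#B) ∑_{b∈B} μ ∘ τ_b^{-1} where τ_b(x) = (x+b)/N. Define Λ₀ = −(K(N,L) ∩ (ℤ/d)) with ℤ/d = { m/d : m ∈ ℤ }, and Λ_n = N·Λ_{n−1} + L for n ≥ 1. Then the set Λ = ⋃_{n=0}^∞ Λ_n is a spectrum of μ_{N,B}; that is, the family of exponential functions { e^{2πiλx} : λ ∈ Λ } forms an orthonormal basis of L²(μ_{N,B}). -/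

import Mathlib

open MeasureTheory ENNReal

/-- `(N,B,L)` is a Hadamard triple in `ℝ`. -/
def IsHadamardTriple (N : ℕ) (B L : Finset ℤ) : Prop :=
  2 ≤ N ∧ 2 ≤ B.card ∧ B.card = L.card ∧
    ∀ l ∈ L, ∀ l' ∈ L, l ≠ l' →
      ∑ b ∈ B, Complex.exp (2 * Real.pi * Complex.I * (b : ℂ) * ((l : ℂ) - (l' : ℂ)) / (N : ℂ)) = 0

/-- The self-similar set `K(N,L) = { ∑_{i=1}^∞ ℓ_i/N^i : ℓ_i ∈ L }`. -/
noncomputable def KsetZ (N : ℕ) (L : Finset ℤ) : Set ℝ :=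
  { x : ℝ | ∃ a : ℕ → ℤ, (∀ i, a i ∈ L) ∧ x = ∑' i : ℕ, (a i : ℝ) / (N : ℝ) ^ (i + 1) }

/-- The exponential function `e_λ(x) = e^{2πiλx}`. -/
noncomputable def expFun (l : ℝ) : ℝ → ℂ :=
  fun x => Complex.exp (2 * Real.pi * Complex.I * (l : ℂ) * (x : ℂ))

/-- `Λ` is a spectrum of `μ`: the family `{e^{2πiλx} : λ ∈ Λ}` forms an
orthonormal basis of `L²(μ)`. -/
def IsSpectrum (μ : Measure ℝ) (Λ : Set ℝ) : Prop :=
  ∃ F : Λ → Lp ℂ 2 μ,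
    (∀ l : Λ, (F l : ℝ → ℂ) =ᵐ[μ] expFun (l : ℝ)) ∧
    Orthonormal ℂ F ∧
    (Submodule.span ℂ (Set.range F)).topologicalClosure = ⊤

lemma ef_norm (l x : ℝ) : ‖expFun l x‖ = 1 := by
  unfold expFun
  have : (2 * Real.pi * Complex.I * (l : ℂ) * (x : ℂ)) = ((2 * Real.pi * l * x : ℝ) : ℂ) * Complex.I := by
    push_cast; ring
  rw [this, Complex.norm_exp_ofReal_mul_I]

lemma ef_add (l l' x : ℝ) : expFun (l + l') x = expFun l x * expFun l' x := by
  unfold expFun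
  rw [← Complex.exp_add]; congr 1; push_cast; ring

lemma ef_comm (l x : ℝ) : expFun l x = expFun x l := by
  unfold expFun
  congr 1; ring

lemma ef_conj (l x : ℝ) : (starRingEnd ℂ) (expFun l x) = expFun (-l) x := by
  unfold expFun
  rw [← Complex.exp_conj]; congr 1
  have h2 : (starRingEnd ℂ) (2 : ℂ) = 2 := Complex.conj_ofNat 2
  simp [h2]

lemma ef_zero (x : ℝ) : expFun 0 x = 1 := by simp [expFun]

lemma ef_eq_one (l x : ℝ) : expFun l x = 1 ↔ ∃ n : ℤ, l * x = n := by
  unfold expFun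
  rw [Complex.exp_eq_one_iff]
  have hp : (2 * Real.pi * Complex.I : ℂ) ≠ 0 := by simp [Real.pi_ne_zero]
  constructor
  · rintro ⟨n, hn⟩
    refine ⟨n, ?_⟩
    have : (2 * Real.pi * Complex.I : ℂ) * ((l : ℂ) * x) = (2 * Real.pi * Complex.I : ℂ) * n := by
      rw [← mul_assoc, hn]; ring
    have := mul_left_cancel₀ hp this
    exact_mod_cast this
  · rintro ⟨n, hn⟩
    refine ⟨n, ?_⟩
    have : ((l : ℂ) * x) = n := by exact_mod_cast hn
    rw [mul_assoc, this]; ring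

lemma ef_cont (l : ℝ) : Continuous (expFun l) := by
  unfold expFun; fun_prop

noncomputable def mB (B : Finset ℤ) (x : ℝ) : ℂ := (B.card : ℂ)⁻¹ * ∑ b ∈ B, expFun b x

noncomputable def Phi (μ : Measure ℝ) (x : ℝ) : ℂ := ∫ t, expFun x t ∂μ

lemma Phi_neg (μ : Measure ℝ) (x : ℝ) : ‖Phi μ (-x)‖ = ‖Phi μ x‖ := by
  unfold Phi
  simp_rw [← ef_conj]
  rw [integral_conj, RCLike.norm_conj]

lemma ef_int (μ : Measure ℝ) [IsProbabilityMeasure μ] (x : ℝ) : Integrable (expFun x) μ := by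
  apply Integrable.of_bound (ef_cont x).aestronglyMeasurable 1
  exact Filter.Eventually.of_forall fun t => (ef_norm x t).le

lemma Phi_zero (μ : Measure ℝ) [IsProbabilityMeasure μ] : Phi μ 0 = 1 := by
  simp [Phi, ef_zero]

lemma Phi_mul (N : ℕ) (hN : 2 ≤ N) (B : Finset ℤ) (μ : Measure ℝ) [IsProbabilityMeasure μ]
    (hμ : μ = (B.card : ℝ≥0∞)⁻¹ •
      ∑ b ∈ B, Measure.map (fun x : ℝ => (x + (b : ℝ)) / (N : ℝ)) μ) (x : ℝ) :
    Phi μ (N * x) = mB B x * Phi μ x := by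
  have hN0 : (N : ℝ) ≠ 0 := by positivity
  have hm : ∀ b : ℤ, Measurable (fun x : ℝ => (x + (b : ℝ)) / (N : ℝ)) := fun b => by fun_prop
  unfold Phi
  conv_lhs => rw [hμ]
  rw [integral_smul_measure, integral_finsetSum_measure]
  · have : ∀ b ∈ B, ∫ t, expFun (N * x) t ∂(Measure.map (fun x : ℝ => (x + (b : ℝ)) / (N : ℝ)) μ)
        = expFun b x * ∫ t, expFun x t ∂μ := by
      intro b _
      rw [integral_map (hm b).aemeasurable (ef_cont _).aestronglyMeasurable, ← integral_const_mul]
      congr 1; ext t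
      unfold expFun
      rw [← Complex.exp_add]; congr 1
      have : (N : ℂ) ≠ 0 := by exact_mod_cast hN0
      push_cast
      field_simp
      ring
    rw [Finset.sum_congr rfl this, ← Finset.sum_mul, mB]
    simp [mul_assoc]
  · intro b _
    have : IsProbabilityMeasure (Measure.map (fun x : ℝ => (x + (b : ℝ)) / (N : ℝ)) μ) :=
      Measure.isProbabilityMeasure_map (hm b).aemeasurable
    exact ef_int _ _

lemma mB_norm_le (B : Finset ℤ) (x : ℝ) : ‖mB B x‖ ≤ 1 := by
  unfold mB
  rw [norm_mul, norm_inv, Complex.norm_natCast]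
  have : ‖∑ b ∈ B, expFun b x‖ ≤ B.card := by
    refine (norm_sum_le _ _).trans ?_
    simp [ef_norm]
  calc _ ≤ (B.card : ℝ)⁻¹ * B.card := by gcongr
    _ ≤ 1 := inv_mul_le_one

lemma mB_periodic (B : Finset ℤ) (d : ℤ) (hd : ∀ b ∈ B, d ∣ b) (hd0 : d ≠ 0) (x : ℝ) (m : ℤ) :
    mB B (x + m / d) = mB B x := by
  unfold mB
  congr 1
  refine Finset.sum_congr rfl fun b hb => ?_
  obtain ⟨c, rfl⟩ := hd b hb
  rw [ef_comm, ef_add, ef_comm x]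
  have : expFun (m / d) ((d * c : ℤ) : ℝ) = 1 := by
    rw [ef_eq_one]
    refine ⟨m * c, ?_⟩
    have : (d : ℝ) ≠ 0 := by exact_mod_cast hd0
    push_cast; field_simp
  rw [this, mul_one]

lemma mB_zero (B : Finset ℤ) (hB : 0 ∈ B) : mB B 0 = 1 := by
  unfold mB
  have : (B.card : ℂ) ≠ 0 := by exact_mod_cast (Finset.card_pos.2 ⟨0, hB⟩).ne'
  simp_rw [ef_comm _ 0, ef_zero]
  simp [this]

lemma mB_norm_one (B : Finset ℤ) (hB : 0 ∈ B) (d : ℤ) (hd : d = B.gcd id) (hd0 : d ≠ 0)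
    (x : ℝ) (hx : ‖mB B x‖ = 1) : ∃ m : ℤ, x = m / d := by
  have hc : (0 : ℝ) < B.card := by exact_mod_cast (Finset.card_pos.2 ⟨0, hB⟩)
  have key : ∀ b ∈ B, expFun b x = 1 := by
    intro b hb
    by_cases hb0 : b = 0
    · subst hb0; simp [ef_zero]
    have hS : ‖∑ b ∈ B, expFun b x‖ = B.card := by
      unfold mB at hx
      rw [norm_mul, norm_inv, Complex.norm_natCast] at hx
      field_simp at hx
      exact hx
    have h1 := Finset.add_sum_erase B (fun b : ℤ => expFun b x) hB
    have hbe : b ∈ B.erase 0 := Finset.mem_erase.2 ⟨hb0, hb⟩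
    have h2 := Finset.add_sum_erase (B.erase 0) (fun b : ℤ => expFun b x) hbe
    have h3 : ‖∑ b ∈ (B.erase 0).erase b, expFun b x‖ ≤ B.card - 2 := by
      refine (norm_sum_le _ _).trans ?_
      simp only [ef_norm, Finset.sum_const, nsmul_eq_mul, mul_one]
      have e1 := Finset.card_erase_add_one hB
      have e2 := Finset.card_erase_add_one hbe
      rw [← e1, ← e2]; push_cast; linarith
    simp only [Int.cast_zero, ef_zero] at h1
    rw [← h1, ← h2, ← add_assoc] at hS
    have h4 : 2 ≤ ‖1 + expFun b x‖ := by
      have := norm_add_le (1 + expFun b x) (∑ b ∈ (B.erase 0).erase b, expFun b x)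
      linarith
    have hn := ef_norm b x
    set z := expFun b x
    have e1 : Complex.normSq z = 1 := by rw [Complex.normSq_eq_norm_sq, hn]; norm_num
    have e2 : 4 ≤ Complex.normSq (1 + z) := by rw [Complex.normSq_eq_norm_sq]; nlinarith
    rw [Complex.normSq_apply] at e1 e2
    simp at e2
    apply Complex.ext <;> simp <;> nlinarith
  let H : AddSubgroup ℤ :=
    { carrier := {b : ℤ | ∃ n : ℤ, b * x = n}
      zero_mem' := ⟨0, by simp⟩
      add_mem' := by
        rintro a b ⟨n, hn⟩ ⟨m, hm⟩
        exact ⟨n + m, by push_cast; rw [add_mul, hn, hm]⟩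
      neg_mem' := by
        rintro a ⟨n, hn⟩
        exact ⟨-n, by push_cast; rw [neg_mul, hn]⟩ }
  obtain ⟨g, hg⟩ := Int.subgroup_cyclic H
  have hg' : ∀ b, b ∈ H ↔ g ∣ b := by
    intro b
    rw [hg, ← AddSubgroup.zmultiples_eq_closure, Int.mem_zmultiples_iff]
  have : d ∈ H := by
    rw [hg', hd]
    apply Finset.dvd_gcd
    intro b hb
    rw [id, ← hg']
    exact (ef_eq_one _ _).1 (key b hb)
  obtain ⟨m, hm⟩ := this
  have : (d : ℝ) ≠ 0 := by exact_mod_cast hd0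
  exact ⟨m, by rw [← hm]; field_simp⟩

lemma mB_orth (N : ℕ) (B L : Finset ℤ) (h : IsHadamardTriple N B L) (l l' : ℤ) (hl : l ∈ L)
    (hl' : l' ∈ L) (hne : l ≠ l') : mB B (((l : ℝ) - l') / N) = 0 := by
  unfold mB
  have := h.2.2.2 l hl l' hl' hne
  rw [mul_eq_zero]; right
  rw [← this]
  refine Finset.sum_congr rfl fun b _ => ?_
  unfold expFun
  congr 1
  push_cast; ring

lemma hadamard_sum (N : ℕ) (B L : Finset ℤ) (h : IsHadamardTriple N B L) (x : ℝ) :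
    ∑ l ∈ L, ‖mB B ((x + l) / N)‖ ^ 2 = 1 := by
  classical
  have hc : (0 : ℝ) < B.card := by have := h.2.1; positivity
  let s : ℝ := (√(B.card : ℝ))⁻¹
  have hs : s * s = (B.card : ℝ)⁻¹ := by
    simp only [s]; rw [← mul_inv, Real.mul_self_sqrt hc.le]
  let V := EuclideanSpace ℂ B
  have hin : ∀ (y z : ℝ), inner ℂ (WithLp.toLp 2 fun b : B => (s : ℂ) * expFun ((b : ℤ) : ℝ) y : V)
      (WithLp.toLp 2 fun b : B => (s : ℂ) * expFun ((b : ℤ) : ℝ) z : V) = mB B (z - y) := by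
    intro y z
    rw [EuclideanSpace.inner_eq_star_dotProduct]
    simp only [dotProduct, Pi.star_apply, RCLike.star_def, map_mul, Complex.conj_ofReal, ef_conj]
    unfold mB
    rw [Finset.sum_coe_sort B (fun b : ℤ => (s : ℂ) * expFun (b : ℝ) z * (s * expFun (-(b:ℝ)) y)),
      Finset.mul_sum]
    refine Finset.sum_congr rfl fun b _ => ?_
    have : ((B.card : ℂ))⁻¹ = s * s := by
      rw [← Complex.ofReal_mul, hs]; simp
    rw [this, ef_comm _ (z - y), sub_eq_add_neg, ef_add, ef_comm z, ef_comm (-y)]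
    have : expFun b (-y) = expFun (-(b:ℝ)) y := by unfold expFun; congr 1; push_cast; ring
    rw [this]; ring
  have hB0 : mB B 0 = 1 := by
    unfold mB
    have : (B.card : ℂ) ≠ 0 := by exact_mod_cast hc.ne'
    simp_rw [ef_comm _ 0, ef_zero]
    simp [this]
  let v : L → V := fun l => WithLp.toLp 2 fun b : B => (s : ℂ) * expFun ((b : ℤ) : ℝ) (-(l : ℤ) / N)
  have hv : Orthonormal ℂ v := by
    rw [orthonormal_iff_ite]
    intro i j
    simp only [v]
    rw [hin]
    split_ifs with hij
    · subst hij; simp [hB0]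
    · have := mB_orth N B L h i j i.2 j.2 (fun hh => hij (Subtype.ext hh))
      rw [← this]; congr 1; ring
  have hcard : Fintype.card L = Module.finrank ℂ V := by
    simp [V, h.2.2.1]
  have : Nonempty L := by
    have h1 := h.2.1
    rw [h.2.2.1] at h1
    exact (Finset.card_pos.1 (by omega)).to_subtype
  let b0 := basisOfOrthonormalOfCardEqFinrank hv hcard
  have hb0 : ⇑b0 = v := coe_basisOfOrthonormalOfCardEqFinrank hv hcard
  let ob := b0.toOrthonormalBasis (by rw [hb0]; exact hv)
  have hob : ⇑ob = v := by simp [ob, hb0]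
  let u : V := WithLp.toLp 2 fun b : B => (s : ℂ) * expFun ((b : ℤ) : ℝ) (x / N)
  have hP := ob.sum_sq_norm_inner_right u
  have hu : ‖u‖ ^ 2 = 1 := by
    have : inner ℂ u u = mB B (x / N - x / N) := hin _ _
    rw [sub_self, hB0, inner_self_eq_norm_sq_to_K] at this
    have h2 : ((‖u‖ ^ 2 : ℝ) : ℂ) = ((1 : ℝ) : ℂ) := by simpa using this
    exact Complex.ofReal_injective h2
  rw [hu] at hP
  rw [← hP, ← Finset.sum_coe_sort]
  refine Finset.sum_congr rfl fun l _ => ?_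
  rw [hob]
  simp only [v, u]
  rw [hin]
  congr 3; ring

lemma supp (N : ℕ) (hN : 2 ≤ N) (B : Finset ℤ) (μ : Measure ℝ) [IsProbabilityMeasure μ]
    (hμ : μ = (B.card : ℝ≥0∞)⁻¹ •
      ∑ b ∈ B, Measure.map (fun x : ℝ => (x + (b : ℝ)) / (N : ℝ)) μ) :
    ∃ R : ℝ, 0 ≤ R ∧ ∀ᵐ t ∂μ, |t| ≤ R := by
  have hN' : (2 : ℝ) ≤ N := by exact_mod_cast hN
  let M : ℝ := ∑ b ∈ B, |(b : ℝ)|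
  have hM0 : 0 ≤ M := Finset.sum_nonneg fun _ _ => abs_nonneg _
  have hM : ∀ b ∈ B, |(b : ℝ)| ≤ M := fun b hb =>
    Finset.single_le_sum (f := fun b : ℤ => |(b : ℝ)|) (fun _ _ => abs_nonneg _) hb
  let φ : ℝ → ℝ≥0∞ := fun r => μ {t | r < |t|}
  have hmeas : ∀ r : ℝ, MeasurableSet {t : ℝ | r < |t|} := fun r =>
    measurableSet_lt measurable_const (by fun_prop)
  have hanti : ∀ r s, r ≤ s → φ s ≤ φ r := fun r s h => measure_mono fun t ht => lt_of_le_of_lt h ht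
  have step : ∀ r, φ r ≤ φ (N * r - M) := by
    intro r
    have : φ r = (B.card : ℝ≥0∞)⁻¹ * ∑ b ∈ B, μ ((fun x : ℝ => (x + (b : ℝ)) / (N : ℝ)) ⁻¹' {t | r < |t|}) := by
      simp only [φ]
      conv_lhs => rw [hμ]
      rw [Measure.smul_apply, Measure.finsetSum_apply, smul_eq_mul]
      congr 1
      refine Finset.sum_congr rfl fun b _ => ?_
      rw [Measure.map_apply (by fun_prop) (hmeas r)]
    rw [this]
    calc _ ≤ (B.card : ℝ≥0∞)⁻¹ * ∑ b ∈ B, φ (N * r - M) := by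
          gcongr with b hb
          apply measure_mono
          intro t ht
          simp only [Set.mem_preimage, Set.mem_ofPred_eq] at ht ⊢
          rw [abs_div, Nat.abs_cast, lt_div_iff₀ (by linarith)] at ht
          have := abs_add_le t b
          have := hM b hb
          linarith
      _ ≤ _ := by
          rw [Finset.sum_const, nsmul_eq_mul, ← mul_assoc]
          exact mul_le_of_le_one_left zero_le (ENNReal.inv_mul_le_one _)
  have it : ∀ k : ℕ, φ (M + 1) ≤ φ (M + 1 + k) := by
    intro k
    induction k with
    | zero => simp
    | succ k ih =>
      refine ih.trans ((step _).trans (hanti _ _ ?_))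
      push_cast
      have : (0:ℝ) ≤ k := by positivity
      nlinarith
  have lim : Filter.Tendsto (fun k : ℕ => φ (M + 1 + k)) Filter.atTop (nhds (μ (⋂ k : ℕ, {t : ℝ | M + 1 + k < |t|}))) := by
    apply tendsto_measure_iInter_atTop
    · exact fun k => (hmeas _).nullMeasurableSet
    · intro a b hab t ht
      simp only [Set.mem_ofPred_eq] at ht ⊢
      have : (a : ℝ) ≤ b := by exact_mod_cast hab
      linarith
    · exact ⟨0, measure_ne_top _ _⟩
  have hemp : (⋂ k : ℕ, {t : ℝ | M + 1 + k < |t|}) = ∅ := by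
    ext t
    simp only [Set.mem_iInter, Set.mem_ofPred_eq, Set.mem_empty_iff_false, iff_false, not_forall, not_lt]
    obtain ⟨k, hk⟩ := exists_nat_ge |t|
    exact ⟨k, by linarith⟩
  rw [hemp, measure_empty] at lim
  have h0 : φ (M + 1) ≤ 0 := ge_of_tendsto' lim it
  refine ⟨M + 1, by linarith, ?_⟩
  rw [ae_iff]
  simp only [not_le]
  exact le_antisymm h0 zero_le

lemma Kser_bound (N : ℕ) (hN : 2 ≤ N) (L : Finset ℤ) (a : ℤ) (ha : a ∈ L) (i : ℕ) :
    ‖(a : ℝ) / (N : ℝ) ^ (i + 1)‖ ≤ (∑ l ∈ L, |(l : ℝ)|) * (1 / 2 : ℝ) ^ i := by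
  have hM : |(a : ℝ)| ≤ ∑ l ∈ L, |(l : ℝ)| :=
    Finset.single_le_sum (f := fun b : ℤ => |(b : ℝ)|) (fun _ _ => abs_nonneg _) ha
  have hN' : (2 : ℝ) ≤ N := by exact_mod_cast hN
  rw [norm_div, Real.norm_eq_abs, norm_pow, Real.norm_natCast, one_div, inv_pow, div_eq_mul_inv]
  gcongr
  calc (2 : ℝ) ^ i ≤ N ^ i := by gcongr
    _ ≤ N ^ (i + 1) := by
      apply pow_le_pow_right₀ (by linarith) (by omega)

lemma Kser_bound_summable (L : Finset ℤ) :
    Summable fun i : ℕ => (∑ l ∈ L, |(l : ℝ)|) * (1 / 2 : ℝ) ^ i :=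
  (summable_geometric_of_lt_one (by norm_num) (by norm_num)).mul_left _

lemma Kser_summable (N : ℕ) (hN : 2 ≤ N) (L : Finset ℤ) (a : ℕ → ℤ) (ha : ∀ i, a i ∈ L) :
    Summable fun i : ℕ => (a i : ℝ) / (N : ℝ) ^ (i + 1) :=
  Summable.of_norm_bounded (Kser_bound_summable L) fun i => Kser_bound N hN L (a i) (ha i) i

lemma K_compact (N : ℕ) (hN : 2 ≤ N) (L : Finset ℤ) : IsCompact (KsetZ N L) := by
  let f : (ℕ → L) → ℝ := fun a => ∑' i : ℕ, ((a i : ℤ) : ℝ) / (N : ℝ) ^ (i + 1)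
  have hf : Continuous f := by
    refine continuous_tsum (fun i => ?_) (Kser_bound_summable L)
      fun i a => Kser_bound N hN L (a i) (a i).2 i
    have : Continuous fun a : ℕ → L => (((a i : L) : ℤ) : ℝ) :=
      (continuous_of_discreteTopology (f := fun l : L => ((l : ℤ) : ℝ))).comp (continuous_apply i)
    exact this.div_const _
  have : KsetZ N L = Set.range f := by
    ext x
    constructor
    · rintro ⟨a, ha, rfl⟩
      exact ⟨fun i => ⟨a i, ha i⟩, rfl⟩
    · rintro ⟨a, rfl⟩
      exact ⟨fun i => a i, fun i => (a i).2, rfl⟩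
  rw [this]
  exact isCompact_range hf

lemma K_zero (N : ℕ) (L : Finset ℤ) (hL0 : (0 : ℤ) ∈ L) : (0 : ℝ) ∈ KsetZ N L :=
  ⟨fun _ => 0, fun _ => hL0, by simp⟩

lemma K_step (N : ℕ) (hN : 2 ≤ N) (L : Finset ℤ) (x : ℝ) (hx : x ∈ KsetZ N L) :
    ∃ l ∈ L, (N : ℝ) * x - l ∈ KsetZ N L := by
  obtain ⟨a, ha, rfl⟩ := hx
  refine ⟨a 0, ha 0, fun i => a (i + 1), fun i => ha _, ?_⟩
  have hN0 : (N : ℝ) ≠ 0 := by positivity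
  rw [(Kser_summable N hN L a ha).tsum_eq_zero_add, mul_add, ← tsum_mul_left]
  have : ∀ i : ℕ, (N : ℝ) * ((a (i + 1) : ℝ) / (N : ℝ) ^ (i + 1 + 1)) = (a (i + 1) : ℝ) / (N : ℝ) ^ (i + 1) := by
    intro i; field_simp; ring
  simp_rw [this]
  field_simp; simp; ring

lemma K_inv (N : ℕ) (hN : 2 ≤ N) (L : Finset ℤ) (x : ℝ) (hx : x ∈ KsetZ N L) (l : ℤ) (hl : l ∈ L) :
    (x + l) / N ∈ KsetZ N L := by
  obtain ⟨a, ha, rfl⟩ := hx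
  have hN0 : (N : ℝ) ≠ 0 := by positivity
  have hb : ∀ i, (fun i : ℕ => Nat.casesOn (motive := fun _ => ℤ) i l a) i ∈ L := by
    rintro (_ | i)
    · exact hl
    · exact ha i
  refine ⟨_, hb, ?_⟩
  rw [(Kser_summable N hN L _ hb).tsum_eq_zero_add, add_div, div_eq_inv_mul, ← tsum_mul_left, add_comm]
  congr 1
  · simp
  · congr 1; ext i
    simp only
    field_simp
    ring

/-- Structural facts about the set of frequencies. -/
structure Good (N : ℕ) (L : Finset ℤ) (d : ℤ) (G : Set ℝ) : Prop where
  lat : ∀ x ∈ G, ∃ m : ℤ, x = m / d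
  up : ∀ x ∈ G, ∀ l ∈ L, (N : ℝ) * x + l ∈ G
  down : ∀ x ∈ G, ∃ y ∈ G, ∃ l ∈ L, x = (N : ℝ) * y + l
  K : ∀ x ∈ KsetZ N L, (∃ m : ℤ, x = m / d) → -x ∈ G

lemma lat_inj (N : ℕ) (B L : Finset ℤ) (h : IsHadamardTriple N B L) (hB0 : 0 ∈ B)
    (d : ℤ) (hd : ∀ b ∈ B, d ∣ b) (hd0 : d ≠ 0)
    (l l' : ℤ) (hl : l ∈ L) (hl' : l' ∈ L) (m : ℤ) (hm : ((l : ℝ) - l') / N = m / d) : l = l' := by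
  by_contra hne
  have h1 := mB_orth N B L h l l' hl hl' hne
  rw [hm, ← zero_add ((m : ℝ) / d), mB_periodic B d hd hd0, mB_zero B hB0] at h1
  exact one_ne_zero h1

lemma good (N : ℕ) (B L : Finset ℤ) (h : IsHadamardTriple N B L) (hB0 : 0 ∈ B)
    (d : ℤ) (hd : ∀ b ∈ B, d ∣ b) (hd0 : d ≠ 0) (Λ : ℕ → Set ℝ)
    (hΛ0 : Λ 0 = (fun x : ℝ => -x) '' (KsetZ N L ∩ { x : ℝ | ∃ m : ℤ, x = (m : ℝ) / (d : ℝ) }))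
    (hΛ : ∀ n, Λ (n + 1) = { y : ℝ | ∃ x ∈ Λ n, ∃ l ∈ L, y = (N : ℝ) * x + (l : ℝ) }) :
    Good N L d (⋃ n : ℕ, Λ n) := by
  have hN := h.1
  have hN0 : (N : ℝ) ≠ 0 := by positivity
  have hdR : (d : ℝ) ≠ 0 := by exact_mod_cast hd0
  set S : Set ℝ := KsetZ N L ∩ { x : ℝ | ∃ m : ℤ, x = (m : ℝ) / (d : ℝ) } with hS
  have hfin : S.Finite := by
    obtain ⟨R, hR⟩ := (K_compact N hN L).isBounded.exists_norm_le
    have : S ⊆ (fun m : ℤ => (m : ℝ) / d) '' (Set.Icc (-⌈R * |(d : ℝ)|⌉) ⌈R * |(d : ℝ)|⌉) := by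
      rintro x ⟨hx, m, rfl⟩
      refine ⟨m, ?_, rfl⟩
      have := hR _ hx
      rw [norm_div, Real.norm_eq_abs, Real.norm_eq_abs, div_le_iff₀ (abs_pos.2 hdR)] at this
      have h2 := this.trans (Int.le_ceil _)
      have h3 : |m| ≤ ⌈R * |(d : ℝ)|⌉ := by exact_mod_cast h2
      exact abs_le.1 h3
    exact ((Set.finite_Icc _ _).image _).subset this
  have hex : ∀ x : S, ∃ y : S, ∃ l ∈ L, (y : ℝ) = N * x - l := by
    rintro ⟨x, hx, m, hm⟩
    obtain ⟨l, hl, hk⟩ := K_step N hN L x hx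
    refine ⟨⟨_, hk, N * m - d * l, ?_⟩, l, hl, rfl⟩
    rw [hm]; push_cast; field_simp
  choose g hg using hex
  have hginj : Function.Injective g := by
    intro x y hxy
    obtain ⟨l, hl, h1⟩ := hg x
    obtain ⟨l', hl', h2⟩ := hg y
    obtain ⟨m, hm⟩ := x.2.2
    obtain ⟨m', hm'⟩ := y.2.2
    rw [hxy, h2] at h1
    have hll : l = l' := by
      apply lat_inj N B L h hB0 d hd hd0 l l' hl hl' (m - m')
      push_cast
      rw [sub_div (m : ℝ), ← hm, ← hm']
      field_simp; linarith
    subst hll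
    apply Subtype.ext
    have : (N : ℝ) * y = N * x := by linarith
    exact (mul_left_cancel₀ hN0 this).symm
  have : Finite S := hfin
  have hgs : Function.Surjective g := Finite.injective_iff_surjective.1 hginj
  have h01 : Λ 0 ⊆ Λ 1 := by
    rw [hΛ 0, hΛ0]
    rintro _ ⟨z, hz, rfl⟩
    obtain ⟨x, hx⟩ := hgs ⟨z, hz⟩
    obtain ⟨l, hl, h1⟩ := hg x
    rw [hx] at h1
    refine ⟨-x, ⟨x, x.2, rfl⟩, l, hl, ?_⟩
    simp only at h1 ⊢
    rw [h1]; ring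
  constructor
  · intro x hx
    obtain ⟨n, hn⟩ := Set.mem_iUnion.1 hx
    clear hx
    induction n generalizing x with
    | zero =>
      rw [hΛ0] at hn
      obtain ⟨z, ⟨_, m, rfl⟩, rfl⟩ := hn
      exact ⟨-m, by push_cast; ring⟩
    | succ n ih =>
      rw [hΛ] at hn
      obtain ⟨y, hy, l, hl, rfl⟩ := hn
      obtain ⟨m, rfl⟩ := ih y hy
      exact ⟨N * m + d * l, by push_cast; field_simp⟩
  · intro x hx l hl
    obtain ⟨n, hn⟩ := Set.mem_iUnion.1 hx
    refine Set.mem_iUnion.2 ⟨n + 1, ?_⟩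
    rw [hΛ]
    exact ⟨x, hn, l, hl, rfl⟩
  · intro x hx
    obtain ⟨n, hn⟩ := Set.mem_iUnion.1 hx
    have : ∃ n, x ∈ Λ (n + 1) := by
      cases n with
      | zero => exact ⟨0, h01 hn⟩
      | succ n => exact ⟨n, hn⟩
    obtain ⟨n, hn⟩ := this
    rw [hΛ] at hn
    obtain ⟨y, hy, l, hl, rfl⟩ := hn
    exact ⟨y, Set.mem_iUnion.2 ⟨n, hy⟩, l, hl, rfl⟩
  · intro x hx hm
    refine Set.mem_iUnion.2 ⟨0, ?_⟩
    rw [hΛ0]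
    exact ⟨x, ⟨hx, hm⟩, rfl⟩

lemma orth (N : ℕ) (B L : Finset ℤ) (h : IsHadamardTriple N B L)
    (d : ℤ) (hd : ∀ b ∈ B, d ∣ b) (hd0 : d ≠ 0) (G : Set ℝ) (hG : Good N L d G)
    (μ : Measure ℝ) (hΦ : ∀ x, Phi μ (N * x) = mB B x * Phi μ x) :
    ∀ n : ℕ, ∀ x ∈ G, ∀ y ∈ G, x ≠ y → (∀ k : ℤ, x - y = k / d → k.natAbs ≤ n) →
      Phi μ (x - y) = 0 := by
  have hN := h.1
  have hN0 : (N : ℝ) ≠ 0 := by positivity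
  have hdR : (d : ℝ) ≠ 0 := by exact_mod_cast hd0
  intro n
  induction n with
  | zero =>
    intro x hx y hy hne hk
    exfalso
    obtain ⟨m, hm⟩ := hG.lat x hx
    obtain ⟨m', hm'⟩ := hG.lat y hy
    have h0 := hk (m - m') (by rw [hm, hm']; push_cast; ring)
    have : m = m' := by omega
    apply hne; rw [hm, hm', this]
  | succ n ih =>
    intro x hx y hy hne hk
    obtain ⟨x', hx', l, hl, rfl⟩ := hG.down x hx
    obtain ⟨y', hy', l', hl', rfl⟩ := hG.down y hy
    obtain ⟨m, hm⟩ := hG.lat x' hx'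
    obtain ⟨m', hm'⟩ := hG.lat y' hy'
    have e : (N : ℝ) * x' + l - (N * y' + l') = N * (((l : ℝ) - l') / N + ((m - m' : ℤ) : ℝ) / d) := by
      rw [hm, hm']; push_cast; field_simp; ring
    by_cases hll : l = l'
    · subst hll
      have hne' : x' ≠ y' := fun hh => hne (by rw [hh])
      have e2 : (N : ℝ) * x' + l - (N * y' + l) = N * (x' - y') := by ring
      rw [e2, hΦ, ih x' hx' y' hy' hne' ?_, mul_zero]
      intro k hkk
      have h1 := hk (N * k) (by rw [e2, hkk]; push_cast; ring)
      rw [Int.natAbs_mul, Int.natAbs_natCast] at h1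
      have hk0 : k.natAbs ≠ 0 := by
        intro hz
        have : k = 0 := by omega
        rw [this] at hkk
        apply hne'
        simp at hkk
        linarith
      have : 2 * k.natAbs ≤ N * k.natAbs := Nat.mul_le_mul_right _ hN
      omega
    · rw [e, hΦ, mB_periodic B d hd hd0, mB_orth N B L h l l' hl hl' hll, zero_mul]

lemma fourier_uniq_real (μ : Measure ℝ) [IsProbabilityMeasure μ] (g : ℝ → ℝ) (hg : Integrable g μ)
    (h : ∀ x : ℝ, ∫ t, (g t : ℂ) * expFun x t ∂μ = 0) : g =ᵐ[μ] 0 := by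
  have hm : AEMeasurable g μ := hg.aestronglyMeasurable.aemeasurable
  let p : ℝ → NNReal := fun t => (g t).toNNReal
  let n : ℝ → NNReal := fun t => (-g t).toNNReal
  have hp : AEMeasurable p μ := hm.real_toNNReal
  have hn : AEMeasurable n μ := hm.neg.real_toNNReal
  have hpi : Integrable (fun t => (p t : ℝ)) μ := hg.real_toNNReal
  have hni : Integrable (fun t => (n t : ℝ)) μ := hg.neg.real_toNNReal
  have hpf : ∫⁻ t, (p t : ℝ≥0∞) ∂μ ≠ ∞ := by
    have := hpi.lintegral_lt_top
    simpa using this.ne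
  have hnf : ∫⁻ t, (n t : ℝ≥0∞) ∂μ ≠ ∞ := by
    have := hni.lintegral_lt_top
    simpa using this.ne
  have f1 : IsFiniteMeasure (μ.withDensity fun t => (p t : ℝ≥0∞)) := isFiniteMeasure_withDensity hpf
  have f2 : IsFiniteMeasure (μ.withDensity fun t => (n t : ℝ≥0∞)) := isFiniteMeasure_withDensity hnf
  have heq : (μ.withDensity fun t => (p t : ℝ≥0∞)) = μ.withDensity fun t => (n t : ℝ≥0∞) := by
    apply Measure.ext_of_charFun
    ext s
    rw [charFun_apply_real, charFun_apply_real, integral_withDensity_eq_integral_smul₀ hp,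
      integral_withDensity_eq_integral_smul₀ hn, ← sub_eq_zero, ← integral_sub]
    · rw [← h (s / (2 * Real.pi))]
      congr 1; ext t
      have e : expFun (s / (2 * Real.pi)) t = Complex.exp (s * t * Complex.I) := by
        unfold expFun; congr 1
        have : (Real.pi : ℂ) ≠ 0 := by exact_mod_cast Real.pi_ne_zero
        push_cast; field_simp
      rw [e, NNReal.smul_def, NNReal.smul_def, ← sub_smul]
      have : ((p t : ℝ) - n t) = g t := by
        simp only [p, n, Real.coe_toNNReal']
        exact max_zero_sub_eq_self (g t)
      rw [this]; simp
    all_goals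
      simp_rw [NNReal.smul_def]
      simp_rw [Complex.real_smul]
      refine Integrable.mul_bdd (c := 1) ?_ (Continuous.aestronglyMeasurable (by fun_prop)) (Filter.Eventually.of_forall fun t => ?_)
      · refine Integrable.ofReal ?_
        assumption
      · rw [← Complex.ofReal_mul, Complex.norm_exp_ofReal_mul_I]
  rw [withDensity_eq_iff hp.coe_nnreal_ennreal hn.coe_nnreal_ennreal hpf] at heq
  filter_upwards [heq] with t ht
  have : p t = n t := by exact_mod_cast ht
  have h2 : ((p t : ℝ) - n t) = g t := by
    simp only [p, n, Real.coe_toNNReal']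
    exact max_zero_sub_eq_self (g t)
  rw [← h2, this]; simp

lemma fourier_uniq (μ : Measure ℝ) [IsProbabilityMeasure μ] (g : ℝ → ℂ) (hg : Integrable g μ)
    (h : ∀ x : ℝ, ∫ t, g t * expFun x t ∂μ = 0) : g =ᵐ[μ] 0 := by
  have hbd : ∀ (u : ℝ → ℂ) (x : ℝ), Integrable u μ → Integrable (fun t => u t * expFun x t) μ := by
    intro u x hu
    exact hu.mul_bdd (c := 1) (ef_cont x).aestronglyMeasurable
      (Filter.Eventually.of_forall fun t => (ef_norm x t).le)
  have hgc : Integrable (fun t => (starRingEnd ℂ) (g t)) μ := Complex.conjCLE.toContinuousLinearMap.integrable_comp hg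
  have h' : ∀ x : ℝ, ∫ t, (starRingEnd ℂ) (g t) * expFun x t ∂μ = 0 := by
    intro x
    have := h (-x)
    simp_rw [← ef_conj] at this
    rw [← (starRingEnd ℂ).map_zero, ← this, ← integral_conj]
    congr 1; ext t; simp
  have hre : (fun t => (g t).re) =ᵐ[μ] 0 := by
    apply fourier_uniq_real μ _ hg.re
    intro x
    have e : ∀ t, ((g t).re : ℂ) * expFun x t = (1/2 : ℂ) * (g t * expFun x t + (starRingEnd ℂ) (g t) * expFun x t) := by
      intro t; rw [Complex.re_eq_add_conj]; ring
    refine (integral_congr_ae (Filter.Eventually.of_forall e)).trans ?_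
    rw [integral_const_mul, integral_add (hbd _ _ hg) (hbd _ _ hgc), h, h']; simp
  have him : (fun t => (g t).im) =ᵐ[μ] 0 := by
    apply fourier_uniq_real μ _ hg.im
    intro x
    have e : ∀ t, ((g t).im : ℂ) * expFun x t = (1/(2 * Complex.I) : ℂ) * (g t * expFun x t - (starRingEnd ℂ) (g t) * expFun x t) := by
      intro t; rw [Complex.im_eq_sub_conj]; ring
    refine (integral_congr_ae (Filter.Eventually.of_forall e)).trans ?_
    rw [integral_const_mul, integral_sub (hbd _ _ hg) (hbd _ _ hgc), h, h']; simp
  filter_upwards [hre, him] with t h1 h2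
  exact Complex.ext h1 h2

lemma parseval {H : Type*} [NormedAddCommGroup H] [InnerProductSpace ℂ H] [CompleteSpace H] {ι : Type*}
    (e : ι → H) (he : Orthonormal ℂ e) (V : Submodule ℂ H) [V.HasOrthogonalProjection] [CompleteSpace V]
    (hV : V = (Submodule.span ℂ (Set.range e)).topologicalClosure) (v : H) :
    HasSum (fun i => ‖inner ℂ (e i) v‖ ^ 2) (‖V.starProjection v‖ ^ 2) := by
  have hmem : ∀ i, e i ∈ V := fun i => by
    rw [hV]; exact Submodule.le_topologicalClosure _ (Submodule.subset_span ⟨i, rfl⟩)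
  let e' : ι → V := fun i => ⟨e i, hmem i⟩
  have he' : Orthonormal ℂ e' := by
    rw [← V.subtypeₗᵢ.orthonormal_comp_iff]; exact he
  have hbot : (Submodule.span ℂ (Set.range e'))ᗮ = ⊥ := by
    rw [Submodule.eq_bot_iff]
    intro w hw
    have h1 : (w : H) ∈ (Submodule.span ℂ (Set.range e))ᗮ := by
      rw [Submodule.mem_orthogonal]
      intro u hu
      induction hu using Submodule.span_induction with
      | mem u hu =>
        obtain ⟨i, rfl⟩ := hu
        exact (Submodule.mem_orthogonal _ _).1 hw (e' i) (Submodule.subset_span ⟨i, rfl⟩)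
      | zero => simp
      | add a b _ _ ha hb => rw [inner_add_left, ha, hb, add_zero]
      | smul c a _ ha => rw [inner_smul_left, ha, mul_zero]
    rw [← Submodule.orthogonal_closure, ← hV] at h1
    have := (Submodule.mem_orthogonal _ _).1 h1 w w.2
    exact Subtype.ext (inner_self_eq_zero.1 this)
  let b := HilbertBasis.mkOfOrthogonalEqBot he' hbot
  have hb : ∀ i, b i = e' i := fun i => by simp [b]
  have hs := b.hasSum_inner_mul_inner (V.orthogonalProjectionOnto v) (V.orthogonalProjectionOnto v)
  have h2 : ∀ i, inner ℂ (b i) (V.orthogonalProjectionOnto v) = inner ℂ (e i) v := by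
    intro i
    rw [hb]
    have := Submodule.inner_orthogonalProjectionOnto_eq_of_mem_left (e' i) v
    exact this
  have h3 : ∀ i, inner ℂ (V.orthogonalProjectionOnto v) (b i) * inner ℂ (b i) (V.orthogonalProjectionOnto v) = ((‖inner ℂ (e i) v‖ ^ 2 : ℝ) : ℂ) := by
    intro i
    rw [← inner_conj_symm, h2, mul_comm, Complex.mul_conj, Complex.normSq_eq_norm_sq]
  simp_rw [h3] at hs
  rw [inner_self_eq_norm_sq_to_K] at hs
  have h4 : ‖V.starProjection v‖ = ‖V.orthogonalProjectionOnto v‖ := rfl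
  rw [h4, ← Complex.hasSum_ofReal]
  simpa using hs

open BoundedContinuousFunction in
lemma exists_f (μ : Measure ℝ) [IsProbabilityMeasure μ] (R : ℝ) (hR : ∀ᵐ t ∂μ, |t| ≤ R) :
    ∃ f : ℝ → Lp ℂ 2 μ, (∀ x, (f x : ℝ → ℂ) =ᵐ[μ] expFun x) ∧ ∀ x, AnalyticAt ℝ f x := by
  let c : ℝ → ℂ := fun t => 2 * Real.pi * Complex.I * ((max (-R) (min R t) : ℝ) : ℂ)
  have hc : Continuous c := by fun_prop
  let T : ℝ →ᵇ ℂ := BoundedContinuousFunction.ofNormedAddCommGroup c hc (2 * Real.pi * |R|) (by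
    intro t
    simp only [c]
    rw [norm_mul, norm_mul, norm_mul, Complex.norm_I, Complex.norm_real, Complex.norm_real,
      Real.norm_of_nonneg Real.pi_pos.le, Complex.norm_ofNat, mul_one]
    gcongr
    rw [Real.norm_eq_abs, abs_le]
    have := neg_abs_le R
    have := le_abs_self R
    constructor
    · rw [le_max_iff]; left; linarith
    · rw [max_le_iff]
      exact ⟨by have := neg_le_abs R; linarith, (min_le_left _ _).trans (le_abs_self R)⟩)
  let E : ℝ → (ℝ →ᵇ ℂ) := fun x => NormedSpace.exp (x • T)
  have hE : ∀ x t, E x t = Complex.exp (x * c t) := by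
    intro x t
    let ev : (ℝ →ᵇ ℂ) →+* ℂ :=
      { toFun := fun g => g t
        map_one' := rfl
        map_mul' := fun _ _ => rfl
        map_zero' := rfl
        map_add' := fun _ _ => rfl }
    have hev : Continuous ev := (BoundedContinuousFunction.evalCLM ℝ t).continuous
    let _ : NormedAlgebra ℚ (ℝ →ᵇ ℂ) := NormedAlgebra.restrictScalars ℚ ℝ _
    have := NormedSpace.map_exp ev hev (x • T)
    rw [Complex.exp_eq_exp_ℂ]
    calc E x t = ev (NormedSpace.exp (x • T)) := rfl
      _ = NormedSpace.exp (ev (x • T)) := this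
      _ = _ := by
        rfl
  refine ⟨fun x => BoundedContinuousFunction.toLp 2 μ ℝ (E x), fun x => ?_, fun x => ?_⟩
  · filter_upwards [BoundedContinuousFunction.coeFn_toLp 2 μ ℝ (E x), hR] with t h1 h2
    rw [h1, hE]
    unfold expFun
    congr 1
    simp only [c]
    rw [min_eq_right (abs_le.1 h2).2, max_eq_right (abs_le.1 h2).1]
    ring
  · have h1 : AnalyticAt ℝ (fun x : ℝ => x • T) x :=
      ((ContinuousLinearMap.id ℝ ℝ).smulRight T).analyticAt x
    have h2 : AnalyticAt ℝ E x := AnalyticAt.comp (f := fun x : ℝ => x • T) (g := NormedSpace.exp) (NormedSpace.exp_analytic (𝕂 := ℝ) (x • T)) h1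
    exact ((BoundedContinuousFunction.toLp 2 μ ℝ).analyticAt (E x)).fun_comp h2

lemma proj_analytic {H : Type*} [NormedAddCommGroup H] [InnerProductSpace ℂ H] [NormedSpace ℝ H] [IsScalarTower ℝ ℂ H]
    (P : H →L[ℂ] H) (f : ℝ → H) (hf : ∀ x, AnalyticAt ℝ f x) (x : ℝ) :
    AnalyticAt ℝ (fun x => ‖P (f x)‖ ^ 2) x := by
  have h1 : AnalyticAt ℝ (fun x => P (f x)) x := ((P.restrictScalars ℝ).analyticAt (f x)).fun_comp (hf x)
  have hb := isBoundedBilinearMap_inner (𝕜 := ℂ) (E := H)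
  have h2 : AnalyticAt ℝ (fun p : H × H => inner ℂ p.1 p.2) (P (f x), P (f x)) :=
    hb.toContinuousLinearMap.analyticAt_bilinear _
  have h3 : AnalyticAt ℝ (fun x => inner ℂ (P (f x)) (P (f x))) x :=
    AnalyticAt.comp (f := fun x => (P (f x), P (f x))) (g := fun p : H × H => inner ℂ p.1 p.2) h2 (h1.prod h1)
  have h4 := AnalyticAt.comp (f := fun x => inner ℂ (P (f x)) (P (f x))) (g := Complex.reCLM) (Complex.reCLM.analyticAt (inner ℂ (P (f x)) (P (f x)))) h3
  convert h4 using 1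
  ext y
  have := inner_self_eq_norm_sq (𝕜 := ℂ) (P (f y))
  exact this.symm

lemma finite_inv (N : ℕ) (B L : Finset ℤ) (h : IsHadamardTriple N B L) (hB0 : 0 ∈ B)
    (d : ℤ) (hd : ∀ b ∈ B, d ∣ b) (hd0 : d ≠ 0) (E : Finset ℝ)
    (hE : ∀ x ∈ E, ∀ l ∈ L, mB B ((x + l) / N) ≠ 0 → (x + l) / N ∈ E) :
    ∀ y ∈ E, ‖mB B y‖ = 1 := by
  classical
  have hN := h.1
  have hN0 : (N : ℝ) ≠ 0 := by positivity
  have hdR : (d : ℝ) ≠ 0 := by exact_mod_cast hd0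
  have hper : ∀ y, mB B (Int.fract y) = mB B y := by
    intro y
    have := mB_periodic B d hd hd0 (Int.fract y) (⌊y⌋ * d)
    rw [← this]
    congr 1
    push_cast
    rw [mul_div_assoc, div_self hdR, mul_one, Int.fract_add_floor]
  let F : Finset ℝ := E.image Int.fract
  have hex : ∀ c : ℝ, ∃ x : ℝ, c ∈ F → x ∈ E ∧ Int.fract x = c := by
    intro c
    by_cases hc : c ∈ F
    · obtain ⟨x, hx, hxc⟩ := Finset.mem_image.1 hc
      exact ⟨x, fun _ => ⟨hx, hxc⟩⟩
    · exact ⟨0, fun hh => absurd hh hc⟩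
  choose r hr using hex
  let p : ℝ × ℤ → ℝ := fun q => Int.fract ((r q.1 + q.2) / N)
  let W : ℝ → ℝ := fun y => ‖mB B y‖ ^ 2
  have hW1 : ∀ y, W y ≤ 1 := fun y => pow_le_one₀ (norm_nonneg _) (mB_norm_le B y)
  have hW0 : ∀ y, 0 ≤ W y := fun y => by positivity
  let S := (F ×ˢ L).filter fun q => W (p q) ≠ 0
  have hinj : Set.InjOn p (S : Set (ℝ × ℤ)) := by
    rintro ⟨c, l⟩ hq ⟨c', l'⟩ hq' hpp
    simp only [S, Finset.coe_filter, Finset.mem_product] at hq hq'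
    obtain ⟨⟨hc, hl⟩, -⟩ := hq
    obtain ⟨⟨hc', hl'⟩, -⟩ := hq'
    simp only [p] at hpp
    obtain ⟨k, hk⟩ := Int.fract_eq_fract.1 hpp
    have hk' : r c - r c' = N * k - l + l' := by
      rw [← hk]; field_simp; ring
    have hcc : c = c' := by
      rw [← (hr c hc).2, ← (hr c' hc').2, Int.fract_eq_fract]
      exact ⟨N * k - l + l', by rw [hk']; push_cast; ring⟩
    subst hcc
    have hll : l = l' := by
      apply lat_inj N B L h hB0 d hd hd0 l l' hl hl' (k * d)
      push_cast
      rw [mul_div_assoc, div_self hdR, mul_one, ← hk]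
      ring
    rw [hll]
  have hsum : (F.card : ℝ) = ∑ q ∈ S, W (p q) := by
    rw [Finset.sum_filter_ne_zero, Finset.sum_product]
    have : ∀ c ∈ F, ∑ l ∈ L, W (p (c, l)) = 1 := by
      intro c _
      simp only [W, p, hper]
      exact hadamard_sum N B L h (r c)
    rw [Finset.sum_congr rfl this]; simp
  have himg : S.image p ⊆ F := by
    intro y hy
    obtain ⟨⟨c, l⟩, hq, rfl⟩ := Finset.mem_image.1 hy
    simp only [S, Finset.mem_filter, Finset.mem_product] at hq
    obtain ⟨⟨hc, hl⟩, hw⟩ := hq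
    refine Finset.mem_image.2 ⟨_, hE (r c) (hr c hc).1 l hl ?_, rfl⟩
    intro h0
    apply hw
    simp only [W, p, hper, h0]
    simp
  have hle : (F.card : ℝ) ≤ ∑ c ∈ F, W c := by
    rw [hsum, ← Finset.sum_image hinj]
    exact Finset.sum_le_sum_of_subset_of_nonneg himg fun _ _ _ => hW0 _
  have hz : ∑ c ∈ F, (1 - W c) = 0 := by
    apply le_antisymm
    · rw [Finset.sum_sub_distrib]; simp; linarith
    · exact Finset.sum_nonneg fun c _ => by linarith [hW1 c]
  rw [Finset.sum_eq_zero_iff_of_nonneg fun c _ => by linarith [hW1 c]] at hz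
  intro y hy
  have h1 := hz (Int.fract y) (Finset.mem_image.2 ⟨y, hy, rfl⟩)
  simp only [W, hper] at h1
  have : ‖mB B y‖ ^ 2 = 1 := by linarith
  exact (pow_eq_one_iff_of_nonneg (norm_nonneg _) (by norm_num)).1 this

lemma q_ge (N : ℕ) (B L : Finset ℤ) (h : IsHadamardTriple N B L) (hB0 : 0 ∈ B) (hL0 : 0 ∈ L)
    (d : ℤ) (hdg : d = B.gcd id) (hd0 : d ≠ 0) (q : ℝ → ℝ) (hqa : ∀ x, AnalyticAt ℝ q x)
    (hq1 : ∀ x, q x ≤ 1)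
    (hq : ∀ x, q x = ∑ l ∈ L, ‖mB B ((x + l) / N)‖ ^ 2 * q ((x + l) / N))
    (hqK : ∀ x ∈ KsetZ N L, (∃ m : ℤ, x = m / d) → 1 ≤ q x) : ∀ x, 1 ≤ q x := by
  have hN := h.1
  have hN0 : (N : ℝ) ≠ 0 := by positivity
  have hd : ∀ b ∈ B, d ∣ b := fun b hb => by rw [hdg]; exact Finset.gcd_dvd hb
  have hK := K_compact N hN L
  have h0K := K_zero N L hL0
  have hqc : Continuous q := continuous_iff_continuousAt.2 fun x => (hqa x).continuousAt
  obtain ⟨x0, hx0, hmin⟩ := hK.exists_isMinOn ⟨0, h0K⟩ hqc.continuousOn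
  have hmin' : ∀ y ∈ KsetZ N L, q x0 ≤ q y := fun y hy => hmin hy
  let E : Set ℝ := {x | x ∈ KsetZ N L ∧ q x = q x0}
  have hEK : E ⊆ KsetZ N L := fun x hx => hx.1
  have hEinv : ∀ x ∈ E, ∀ l ∈ L, mB B ((x + l) / N) ≠ 0 → (x + l) / N ∈ E := by
    rintro x ⟨hxK, hx⟩ l hl hne
    refine ⟨K_inv N hN L x hxK l hl, ?_⟩
    have hz : ∑ l ∈ L, ‖mB B ((x + l) / N)‖ ^ 2 * (q ((x + l) / N) - q x0) = 0 := by
      simp_rw [mul_sub]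
      rw [Finset.sum_sub_distrib, ← hq, ← Finset.sum_mul, hadamard_sum N B L h, hx]; ring
    rw [Finset.sum_eq_zero_iff_of_nonneg] at hz
    · have := hz l hl
      rw [mul_eq_zero] at this
      rcases this with h1 | h1
      · simp at h1; exact absurd h1 hne
      · linarith
    · intro l hl
      have := hmin' _ (K_inv N hN L x hxK l hl)
      exact mul_nonneg (by positivity) (by linarith)
  have hinf : E.Infinite := by
    intro hfin
    have hone : ∀ y ∈ E, ‖mB B y‖ = 1 := by
      have := finite_inv N B L h hB0 d hd hd0 hfin.toFinset (by
        intro x hx l hl hne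
        rw [Set.Finite.mem_toFinset] at hx ⊢
        exact hEinv x hx l hl hne)
      intro y hy
      exact this y (by rwa [Set.Finite.mem_toFinset])
    have hx01 : 1 ≤ q x0 :=
      hqK x0 hx0 (mB_norm_one B hB0 d hdg hd0 x0 (hone x0 ⟨hx0, rfl⟩))
    have hKE : KsetZ N L ⊆ E := fun y hy =>
      ⟨hy, le_antisymm ((hq1 y).trans hx01) (hmin' y hy)⟩
    have hLc : 1 < L.card := by have := h.2.1; have := h.2.2.1; omega
    obtain ⟨l, hl, hl0⟩ := Finset.exists_mem_ne hLc 0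
    have h1 := hone _ (hKE (K_inv N hN L 0 h0K l hl))
    have h2 := mB_orth N B L h l 0 hl hL0 hl0
    simp at h1 h2
    rw [h2] at h1
    simp at h1
  obtain ⟨z, -, hz⟩ := hinf.exists_accPt_of_subset_isCompact hK hEK
  rw [accPt_iff_frequently_nhdsNE] at hz
  have hconst : Set.EqOn q (fun _ => q x0) Set.univ :=
    AnalyticOnNhd.eqOn_of_preconnected_of_frequently_eq (fun x _ => hqa x) (fun x _ => analyticAt_const)
      isPreconnected_univ (Set.mem_univ z) (hz.mono fun y hy => hy.2)
  intro x
  have e1 := hconst (Set.mem_univ x)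
  have e2 := hconst (Set.mem_univ 0)
  have e3 := hqK 0 h0K ⟨0, by simp⟩
  simp only at e1 e2
  rw [e1, ← e2]; exact e3

lemma q_fun (N : ℕ) (B L : Finset ℤ) (h : IsHadamardTriple N B L) (hB0 : 0 ∈ B)
    (d : ℤ) (hd : ∀ b ∈ B, d ∣ b) (hd0 : d ≠ 0) (G : Set ℝ) (hG : Good N L d G)
    (μ : Measure ℝ) (hΦ : ∀ x, Phi μ (N * x) = mB B x * Phi μ x) (q : ℝ → ℝ)
    (hq : ∀ x, HasSum (fun g : G => ‖Phi μ (x + g)‖ ^ 2) (q x)) (x : ℝ) :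
    q x = ∑ l ∈ L, ‖mB B ((x + l) / N)‖ ^ 2 * q ((x + l) / N) := by
  have hN := h.1
  have hN0 : (N : ℝ) ≠ 0 := by positivity
  let φ : L × G → G := fun p => ⟨N * (p.2 : ℝ) + ((p.1 : ℤ) : ℝ), hG.up _ p.2.2 _ p.1.2⟩
  have hφ : Function.Bijective φ := by
    constructor
    · rintro ⟨⟨l, hl⟩, ⟨g, hg⟩⟩ ⟨⟨l', hl'⟩, ⟨g', hg'⟩⟩ hpp
      have e : (N : ℝ) * g + l = N * g' + l' := congrArg Subtype.val hpp
      obtain ⟨m, hm⟩ := hG.lat g hg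
      obtain ⟨m', hm'⟩ := hG.lat g' hg'
      have hll : l = l' := by
        apply lat_inj N B L h hB0 d hd hd0 l l' hl hl' (m' - m)
        push_cast
        rw [sub_div (m' : ℝ), ← hm, ← hm']
        field_simp; linarith
      subst hll
      have : g = g' := mul_left_cancel₀ hN0 (by linarith)
      subst this
      rfl
    · rintro ⟨g, hg⟩
      obtain ⟨y, hy, l, hl, rfl⟩ := hG.down g hg
      exact ⟨⟨⟨l, hl⟩, ⟨y, hy⟩⟩, rfl⟩
  have hs : HasSum ((fun g : G => ‖Phi μ (x + g)‖ ^ 2) ∘ (Equiv.ofBijective φ hφ)) (q x) :=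
    (Equiv.hasSum_iff (Equiv.ofBijective φ hφ)).2 (hq x)
  have e1 : q x = ∑' (l : L) (g : G), ‖Phi μ (x + (N * (g : ℝ) + ((l : ℤ) : ℝ)))‖ ^ 2 := by
    rw [← hs.tsum_eq, hs.summable.tsum_prod]
    rfl
  rw [e1, tsum_fintype, ← Finset.sum_coe_sort L]
  refine Finset.sum_congr rfl fun l _ => ?_
  rw [← (hq ((x + ((l : ℤ) : ℝ)) / N)).tsum_eq, ← tsum_mul_left]
  congr 1; ext ⟨g, hg⟩
  obtain ⟨m, hm⟩ := hG.lat g hg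
  have e2 : x + (N * g + ((l : ℤ) : ℝ)) = N * ((x + ((l : ℤ) : ℝ)) / N + g) := by field_simp; ring
  simp only
  rw [e2, hΦ, norm_mul, mul_pow]
  congr 3
  rw [hm, mB_periodic B d hd hd0]

theorem construction_of_spectrum (N : ℕ) (B L : Finset ℤ)
    (h : IsHadamardTriple N B L) (hB0 : (0 : ℤ) ∈ B) (hL0 : (0 : ℤ) ∈ L)
    (d : ℤ) (hd : d = B.gcd id)
    (μ : Measure ℝ) [IsProbabilityMeasure μ]
    (hμ : μ = (B.card : ℝ≥0∞)⁻¹ •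
      ∑ b ∈ B, Measure.map (fun x : ℝ => (x + (b : ℝ)) / (N : ℝ)) μ)
    (Λ : ℕ → Set ℝ)
    (hΛ0 : Λ 0 = (fun x : ℝ => -x) '' (KsetZ N L ∩ { x : ℝ | ∃ m : ℤ, x = (m : ℝ) / (d : ℝ) }))
    (hΛ : ∀ n, Λ (n + 1) = { y : ℝ | ∃ x ∈ Λ n, ∃ l ∈ L, y = (N : ℝ) * x + (l : ℝ) }) :
    IsSpectrum μ (⋃ n : ℕ, Λ n) := by
  have hN := h.1
  have hd0 : d ≠ 0 := by
    intro h0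
    rw [hd, Finset.gcd_eq_zero_iff] at h0
    obtain ⟨b, hb, hb0⟩ := Finset.exists_mem_ne (show 1 < B.card from h.2.1) 0
    exact hb0 (h0 b hb)
  have hdv : ∀ b ∈ B, d ∣ b := fun b hb => by rw [hd]; exact Finset.gcd_dvd hb
  have hG := good N B L h hB0 d hdv hd0 Λ hΛ0 hΛ
  set G := ⋃ n : ℕ, Λ n
  have hΦ := Phi_mul N hN B μ hμ
  obtain ⟨R, -, hR⟩ := supp N hN B μ hμ
  obtain ⟨f, hf, hfa⟩ := exists_f μ R hR
  have hin : ∀ a b, inner ℂ (f a) (f b) = Phi μ (b - a) := by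
    intro a b
    rw [L2.inner_def, Phi]
    apply integral_congr_ae
    filter_upwards [hf a, hf b] with t h1 h2
    rw [h1, h2, sub_eq_add_neg, ef_add, ← ef_conj]
    simp
  have hfn : ∀ x, ‖f x‖ ^ 2 = 1 := by
    intro x
    have := hin x x
    rw [sub_self, Phi_zero, inner_self_eq_norm_sq_to_K] at this
    have h2 : ((‖f x‖ ^ 2 : ℝ) : ℂ) = ((1 : ℝ) : ℂ) := by simpa using this
    exact Complex.ofReal_injective h2
  let F : G → Lp ℂ 2 μ := fun g => f g
  have hF : Orthonormal ℂ F := by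
    classical
    rw [orthonormal_iff_ite]
    intro i j
    simp only [F]
    rw [hin]
    split_ifs with hij
    · subst hij; rw [sub_self, Phi_zero]
    · have hne : (j : ℝ) ≠ i := fun hh => hij (Subtype.ext hh.symm)
      obtain ⟨m, hm⟩ := hG.lat j j.2
      obtain ⟨m', hm'⟩ := hG.lat i i.2
      apply orth N B L h d hdv hd0 G hG μ hΦ (m - m').natAbs j j.2 i i.2 hne
      intro k hk
      rw [hm, hm'] at hk
      have hdR : (d : ℝ) ≠ 0 := by exact_mod_cast hd0
      field_simp at hk
      have : m - m' = k := by exact_mod_cast hk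
      rw [this]
  refine ⟨F, fun l => hf l, hF, ?_⟩
  set V := (Submodule.span ℂ (Set.range F)).topologicalClosure with hV
  have hVc : CompleteSpace V := (Submodule.isClosed_topologicalClosure _).completeSpace_coe
  let q : ℝ → ℝ := fun x => ‖V.starProjection (f (-x))‖ ^ 2
  have hqs : ∀ x, HasSum (fun g : G => ‖Phi μ (x + g)‖ ^ 2) (q x) := by
    intro x
    have := parseval F hF V hV (f (-x))
    convert this using 3 with g
    simp only [F]
    rw [hin, ← Phi_neg]
    congr 2; ring
  have hqa : ∀ x, AnalyticAt ℝ q x := by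
    apply proj_analytic V.starProjection (fun x => f (-x))
    intro x
    exact AnalyticAt.comp (g := f) (f := fun x : ℝ => -x) (hfa (-x)) analyticAt_id.neg
  have hq1 : ∀ x, q x ≤ 1 := by
    intro x
    have h1 := Submodule.norm_sq_eq_add_norm_sq_starProjection (f (-x)) V
    rw [hfn] at h1
    have : 0 ≤ ‖Vᗮ.starProjection (f (-x))‖ ^ 2 := by positivity
    simp only [q]; linarith
  have hqK : ∀ x ∈ KsetZ N L, (∃ m : ℤ, x = m / d) → 1 ≤ q x := by
    intro x hx hm
    have hg := hG.K x hx hm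
    have := le_hasSum (hqs x) ⟨-x, hg⟩ fun _ _ => by positivity
    simpa [Phi_zero] using this
  have hge := q_ge N B L h hB0 hL0 d hd hd0 q hqa hq1
    (q_fun N B L h hB0 d hdv hd0 G hG μ hΦ q hqs) hqK
  have hfV : ∀ x, f x ∈ V := by
    intro x
    have h1 := Submodule.norm_sq_eq_add_norm_sq_starProjection (f x) V
    have h2 := hge (-x)
    simp only [q, neg_neg] at h2
    rw [hfn] at h1
    have h3 : ‖Vᗮ.starProjection (f x)‖ ^ 2 = 0 := le_antisymm (by linarith) (by positivity)
    have h4 : Vᗮ.starProjection (f x) = 0 := by simpa using h3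
    have h5 : f x ∈ Vᗮᗮ := by
      rwa [← Submodule.starProjection_apply_eq_zero_iff]
    rwa [Submodule.orthogonal_orthogonal] at h5
  rw [← Submodule.orthogonal_eq_bot_iff, Submodule.eq_bot_iff]
  intro g hg
  rw [Lp.eq_zero_iff_ae_eq_zero]
  apply fourier_uniq μ g ((Lp.memLp g).integrable (by norm_num))
  intro x
  have h1 := (Submodule.mem_orthogonal _ _).1 hg (f (-x)) (hfV (-x))
  rw [L2.inner_def] at h1
  rw [← h1]
  apply integral_congr_ae
  filter_upwards [hf (-x)] with t ht
  rw [ht]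
  have := ef_conj (-x) t
  rw [neg_neg] at this
  rw [← this]
  simp
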